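/- arXiv:1006.2296 — 2 statements merged into one kernel-verified Lean document; each statement's English description precedes it below -/
import Mathlib

section
/- Let α > 1 and L > 0. There exists a non-negative 1-periodic C^∞ function φ_{α,L} : ℝ → ℝ, belonging to the Gevrey class G^{α,L}([−1/2, 1/2]) (i.e. |φ_{α,L}|_{α,L} < ∞), whose support within [−1/2, 1/2] is contained in [−1/4, 1/4], and which satisfies φ_{α,L}(0) = 1 and φ_{α,L}'(0) = 0. -/
open scoped BigOperators ENNReal
open Real

noncomputable section

/-- Gevrey-(α, L) norm of a real function on a set `J ⊆ ℝ`, as an extended real: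
`|f|_{α,L} = Σ_{l ∈ ℕ} L^{lα} (l!)^{−α} sup_J |f^{(l)}|`. -/
noncomputable def gevreyNorm1 (α L : ℝ) (J : Set ℝ) (f : ℝ → ℝ) : ℝ≥0∞ :=
  ∑' l : ℕ,
    ENNReal.ofReal (L ^ (α * (l : ℝ)) / ((Nat.factorial l : ℝ) ^ α) *
      ⨆ x : J, |deriv^[l] f x.1|)

open Filter Topology Complex in
/-- Radius lemma: on a disc of radius proportional to `cos a`, the inverse power keeps
a real part bounded below. -/
lemma gevreyAux_radius (n : ℕ) : ∃ θ : ℝ, 0 < θ ∧ θ < 1 ∧ ∀ a : ℝ, 0 < Real.cos a →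
    ∀ h : ℂ, ‖h‖ ≤ θ * Real.cos a →
      Complex.cos (a + h) ≠ 0 ∧
      (Real.cos a)⁻¹ ^ n / 2 ≤ ((Complex.cos (a + h))⁻¹ ^ n).re := by
  -- continuity of the inverse power at 1
  have h1 : ∀ᶠ u : ℂ in 𝓝 1, u ≠ 0 ∧ (1 / 2 : ℝ) < (u⁻¹ ^ n).re := by
    have hc : ContinuousAt (fun u : ℂ => (u⁻¹ ^ n).re) 1 := by
      apply Complex.continuous_re.continuousAt.comp
      exact (continuousAt_inv₀ one_ne_zero).pow n
    refine (eventually_ne_nhds one_ne_zero).and (hc.eventually (lt_mem_nhds ?_))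
    norm_num
  obtain ⟨δ, hδ, hball⟩ := Metric.eventually_nhds_iff.1 h1
  have h2 : ∀ᶠ h : ℂ in 𝓝 0, ‖Complex.cos h - 1‖ < δ / 2 := by
    have hc : ContinuousAt (fun h : ℂ => ‖Complex.cos h - 1‖) 0 := by fun_prop
    refine hc.eventually (gt_mem_nhds ?_)
    simp; positivity
  have h3 : ∀ᶠ h : ℂ in 𝓝 0, ‖Complex.sin h‖ ≤ 2 * ‖h‖ := by
    have := (Complex.hasDerivAt_sin 0).isLittleO
    have h4 := this.def (c := 1) one_pos
    filter_upwards [h4] with h hh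
    simp at hh
    calc ‖Complex.sin h‖ = ‖(Complex.sin h - h) + h‖ := by ring_nf
      _ ≤ ‖Complex.sin h - h‖ + ‖h‖ := norm_add_le _ _
      _ ≤ 2 * ‖h‖ := by linarith
  obtain ⟨r, hr, hr2⟩ := Metric.eventually_nhds_iff.1 (h2.and h3)
  refine ⟨min (min (r / 2) (δ / 8)) (1 / 2), by positivity, ?_, ?_⟩
  · exact lt_of_le_of_lt (min_le_right _ _) (by norm_num)
  intro a ha h hh
  have hθ1 : min (min (r / 2) (δ / 8)) (1 / 2) ≤ r / 2 := (min_le_left _ _).trans (min_le_left _ _)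
  have hθ2 : min (min (r / 2) (δ / 8)) (1 / 2) ≤ δ / 8 := (min_le_left _ _).trans (min_le_right _ _)
  generalize min (min (r / 2) (δ / 8)) (1 / 2) = θ at *
  have hca : Real.cos a ≤ 1 := Real.cos_le_one a
  have hh1 : ‖h‖ ≤ r / 2 * Real.cos a := hh.trans (by gcongr)
  have hh2 : ‖h‖ ≤ δ / 8 * Real.cos a := hh.trans (by gcongr)
  obtain ⟨hcos, hsin⟩ := @hr2 h (by rw [dist_zero_right]; nlinarith)
  have hc0 : (Real.cos a : ℂ) ≠ 0 := by exact_mod_cast ha.ne'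
  set u : ℂ := Complex.cos (a + h) / Real.cos a with hu
  have hcu : Complex.cos (a + h) = Real.cos a * u := by rw [hu]; field_simp
  have hdist : dist u 1 < δ := by
    rw [dist_eq_norm]
    have e1 : u - 1 = (Complex.cos h - 1) - (Real.sin a : ℂ) * Complex.sin h / Real.cos a := by
      rw [hu, Complex.cos_add, ← Complex.ofReal_cos, ← Complex.ofReal_sin]
      field_simp
      ring
    rw [e1]
    have hs : ‖(Real.sin a : ℂ) * Complex.sin h / Real.cos a‖ ≤ δ / 4 := by
      rw [norm_div, norm_mul, Complex.norm_real, Complex.norm_real, Real.norm_eq_abs,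
        Real.norm_eq_abs, abs_of_pos ha, div_le_iff₀ ha]
      have := Real.abs_sin_le_one a
      calc |Real.sin a| * ‖Complex.sin h‖ ≤ 1 * (2 * ‖h‖) := by gcongr
        _ ≤ δ / 4 * Real.cos a := by linarith
    calc _ ≤ ‖Complex.cos h - 1‖ + ‖(Real.sin a : ℂ) * Complex.sin h / Real.cos a‖ := norm_sub_le _ _
      _ < δ := by linarith
  obtain ⟨hu0, hure⟩ := hball hdist
  rw [hcu]
  refine ⟨mul_ne_zero hc0 hu0, ?_⟩
  have e2 : ((Real.cos a : ℂ) * u)⁻¹ ^ n = (((Real.cos a)⁻¹ ^ n : ℝ) : ℂ) * u⁻¹ ^ n := by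
    rw [mul_inv, mul_pow]; push_cast; rfl
  rw [e2, Complex.re_ofReal_mul, div_eq_mul_inv]
  have : 0 < (Real.cos a)⁻¹ ^ n := by positivity
  apply mul_le_mul_of_nonneg_left _ this.le
  linarith

/-- Iterated derivatives of a real function agreeing with a holomorphic one. -/
lemma gevreyAux_iter (f : ℝ → ℝ) (hf : ContDiff ℝ (⊤ : ℕ∞) f) (F : ℂ → ℂ) (x : ℝ)
    (hF : AnalyticAt ℂ F x) (hfF : ∀ᶠ y : ℝ in nhds x, (f y : ℂ) = F y) (l : ℕ) :
    ∀ᶠ y : ℝ in nhds x, ((iteratedDeriv l f y : ℝ) : ℂ) = iteratedDeriv l F y := by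
  induction l with
  | zero => simpa using hfF
  | succ l ih =>
    have hA : ∀ᶠ y : ℝ in nhds x, AnalyticAt ℂ F y :=
      Complex.continuous_ofReal.continuousAt.eventually hF.eventually_analyticAt
    filter_upwards [ih.eventually_nhds, hA] with y hy hyA
    rw [iteratedDeriv_succ, iteratedDeriv_succ]
    have h1 : HasDerivAt (iteratedDeriv l F) (deriv (iteratedDeriv l F) y) (y : ℂ) := by
      have : AnalyticAt ℂ (iteratedDeriv l F) y := by
        rw [iteratedDeriv_eq_iterate]; exact hyA.iterated_deriv l
      exact this.differentiableAt.hasDerivAt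
    have h2 : HasDerivAt (iteratedDeriv l f) (deriv (iteratedDeriv l f) y) y :=
      ((hf.differentiable_iteratedDeriv l (by exact_mod_cast WithTop.coe_lt_top _)) y).hasDerivAt
    exact (h2.ofReal_comp.congr_of_eventuallyEq (hy.mono fun z hz => hz.symm)).unique h1.comp_ofReal

/-- Optimisation of `t ^ l * exp (- t ^ n / 2)`. -/
lemma gevreyAux_opt (n : ℕ) (hn : 1 ≤ n) (l : ℕ) (t : ℝ) (ht : 0 < t) :
    t ^ l * Real.exp (-(t ^ n / 2)) ≤ 2 ^ l * (l.factorial : ℝ) ^ (1 / (n : ℝ)) := by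
  have hn0 : n ≠ 0 := by omega
  have hfac : (0 : ℝ) < l.factorial := by exact_mod_cast l.factorial_pos
  have hn0' : (n : ℝ) ≠ 0 := by exact_mod_cast hn0
  refine le_of_pow_le_pow_left₀ hn0 (by positivity) ?_
  have e1 : (2 ^ l * (l.factorial : ℝ) ^ (1 / (n : ℝ))) ^ n = (2 ^ l) ^ n * l.factorial := by
    rw [mul_pow, ← Real.rpow_natCast ((l.factorial : ℝ) ^ (1 / (n : ℝ))) n, ← Real.rpow_mul hfac.le,
      one_div_mul_cancel hn0', Real.rpow_one]
  rw [e1]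
  have hy : 0 < t ^ n := by positivity
  have h3 := Real.pow_div_factorial_le_exp (t ^ n / 2) (by positivity) l
  have h4 : Real.exp (-(t ^ n / 2)) ^ n ≤ Real.exp (-(t ^ n / 2)) := by
    apply pow_le_of_le_one (Real.exp_pos _).le _ hn0
    rw [Real.exp_le_one_iff]; linarith
  have h5 : (2 : ℝ) ^ l ≤ (2 ^ l) ^ n := le_self_pow₀ (one_le_pow₀ (by norm_num)) hn0
  calc (t ^ l * Real.exp (-(t ^ n / 2))) ^ n
      = (t ^ n) ^ l * Real.exp (-(t ^ n / 2)) ^ n := by rw [mul_pow]; ring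
    _ ≤ (t ^ n) ^ l * Real.exp (-(t ^ n / 2)) := by gcongr
    _ = 2 ^ l * l.factorial * ((t ^ n / 2) ^ l / l.factorial) * Real.exp (-(t ^ n / 2)) := by
        rw [div_pow]; field_simp
    _ ≤ 2 ^ l * l.factorial * Real.exp (t ^ n / 2) * Real.exp (-(t ^ n / 2)) := by gcongr
    _ = 2 ^ l * l.factorial := by rw [mul_assoc, ← Real.exp_add]; simp
    _ ≤ (2 ^ l) ^ n * l.factorial := by gcongr

/-- The bump function. -/
def gevreyAux_phi (n : ℕ) (x : ℝ) : ℝ :=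
  Real.exp 1 * expNegInvGlue (Real.cos (2 * π * x) ^ n)

lemma gevreyAux_phi_smooth (n : ℕ) : ContDiff ℝ (⊤ : ℕ∞) (gevreyAux_phi n) := by
  unfold gevreyAux_phi
  have h : ContDiff ℝ (⊤ : ℕ∞) expNegInvGlue := expNegInvGlue.contDiff
  have h2 : ContDiff ℝ (⊤ : ℕ∞) (fun x : ℝ => Real.cos (2 * π * x) ^ n) := by fun_prop
  exact contDiff_const.mul (h.comp h2)

/-- Bound at points where the cosine is positive. -/
lemma gevreyAux_bound_pos (n : ℕ) (hn : 1 ≤ n) : ∃ B : ℝ, 0 < B ∧ ∀ (l : ℕ) (x : ℝ),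
    0 < Real.cos (2 * π * x) →
    |iteratedDeriv l (gevreyAux_phi n) x| ≤
      Real.exp 1 * B ^ l * (l.factorial * (l.factorial : ℝ) ^ (1 / (n : ℝ))) := by
  obtain ⟨θ, hθ, hθ1, H⟩ := gevreyAux_radius n
  refine ⟨2 * (2 * π / θ), by positivity, ?_⟩
  intro l x hx
  set c := Real.cos (2 * π * x) with hc
  set F : ℂ → ℂ := fun z => Complex.exp (1 - (Complex.cos (2 * π * z))⁻¹ ^ n) with hFdef
  set R : ℝ := θ * c / (2 * π) with hR
  have hRpos : 0 < R := by positivity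
  have hdisc : ∀ z : ℂ, ‖z - x‖ ≤ R → Complex.cos (2 * π * z) ≠ 0 ∧
      c⁻¹ ^ n / 2 ≤ ((Complex.cos (2 * π * z))⁻¹ ^ n).re := by
    intro z hz
    have := H (2 * π * x) hx (2 * π * (z - x)) (by
      rw [norm_mul, norm_mul, Complex.norm_real, Real.norm_eq_abs, abs_of_pos Real.pi_pos]
      rw [hR, le_div_iff₀ (by positivity)] at hz
      simp only [Complex.norm_ofNat]
      linarith)
    have e : (((2 * π * x : ℝ) : ℂ) + 2 * π * (z - x)) = 2 * π * z := by push_cast; ring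
    rwa [e] at this
  have hdiff : ∀ z : ℂ, Complex.cos (2 * π * z) ≠ 0 → DifferentiableAt ℂ F z := by
    intro z hz
    have h1 : DifferentiableAt ℂ (fun z : ℂ => Complex.cos (2 * π * z)) z := by fun_prop
    exact ((h1.inv hz).pow n).const_sub 1 |>.cexp
  have hcont : Continuous (fun z : ℂ => Complex.cos (2 * π * z)) := by fun_prop
  have hanal : AnalyticAt ℂ F x := by
    rw [Complex.analyticAt_iff_eventually_differentiableAt]
    filter_upwards [hcont.continuousAt.eventually_ne (hdisc x (by simpa using hRpos.le)).1] with z hz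
    exact hdiff z hz
  have hcontR : Continuous (fun y : ℝ => Real.cos (2 * π * y)) := by fun_prop
  have heq : ∀ᶠ y : ℝ in nhds x, (gevreyAux_phi n y : ℂ) = F y := by
    filter_upwards [hcontR.continuousAt.eventually (lt_mem_nhds hx)] with y hy
    have : ¬ (Real.cos (2 * π * y) ^ n ≤ 0) := not_le.2 (by positivity)
    simp only [gevreyAux_phi, expNegInvGlue, if_neg this, hFdef]
    rw [← Real.exp_add]
    push_cast
    rw [inv_pow]; ring_nf
  have hit := (gevreyAux_iter _ (gevreyAux_phi_smooth n) F x hanal heq l).self_of_nhds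
  have hcauchy : ‖iteratedDeriv l F x‖ ≤
      l.factorial * Real.exp (1 - c⁻¹ ^ n / 2) / R ^ l := by
    apply Complex.norm_iteratedDeriv_le_of_forall_mem_sphere_norm_le l hRpos
    · apply DifferentiableOn.diffContOnCl
      rw [closure_ball _ hRpos.ne']
      intro z hz
      exact (hdiff z (hdisc z (by simpa [dist_eq_norm] using hz)).1).differentiableWithinAt
    · intro z hz
      have := (hdisc z (by simpa [dist_eq_norm] using (Metric.mem_sphere.1 hz).le)).2
      rw [hFdef]
      simp only [Complex.norm_exp, Complex.sub_re, Complex.one_re]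
      exact Real.exp_le_exp.2 (by linarith)
  have e3 : |iteratedDeriv l (gevreyAux_phi n) x| = ‖iteratedDeriv l F x‖ := by
    rw [← hit, Complex.norm_real, Real.norm_eq_abs]
  rw [e3]
  refine hcauchy.trans ?_
  have hopt := gevreyAux_opt n hn l c⁻¹ (by positivity)
  have e4 : l.factorial * Real.exp (1 - c⁻¹ ^ n / 2) / R ^ l =
      Real.exp 1 * (2 * π / θ) ^ l * l.factorial * (c⁻¹ ^ l * Real.exp (-(c⁻¹ ^ n / 2))) := by
    rw [sub_eq_add_neg, Real.exp_add, hR]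
    simp only [div_pow, mul_pow, inv_pow]
    field_simp
  rw [e4]
  calc _ ≤ Real.exp 1 * (2 * π / θ) ^ l * l.factorial *
        (2 ^ l * (l.factorial : ℝ) ^ (1 / (n : ℝ))) := by gcongr
    _ = _ := by rw [mul_pow 2 (2 * π / θ)]; ring

lemma gevreyAux_dense : Dense {x : ℝ | Real.cos (2 * π * x) ≠ 0} := by
  have hc : Set.Countable {x : ℝ | Real.cos (2 * π * x) = 0} := by
    apply (Set.countable_range (fun k : ℤ => (2 * k + 1) * π / 2 / (2 * π))).mono
    intro x hx
    obtain ⟨k, hk⟩ := Real.cos_eq_zero_iff.1 hx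
    refine ⟨k, ?_⟩
    simp only
    rw [← hk]; field_simp
  exact hc.dense_compl ℝ

lemma gevreyAux_bound (n : ℕ) (hn : Odd n) : ∃ B : ℝ, 0 < B ∧ ∀ (l : ℕ) (x : ℝ),
    |iteratedDeriv l (gevreyAux_phi n) x| ≤
      Real.exp 1 * B ^ l * (l.factorial * (l.factorial : ℝ) ^ (1 / (n : ℝ))) := by
  obtain ⟨B, hB, H⟩ := gevreyAux_bound_pos n hn.pos
  refine ⟨B, hB, fun l => ?_⟩
  have hclosed : IsClosed {x : ℝ | |iteratedDeriv l (gevreyAux_phi n) x| ≤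
      Real.exp 1 * B ^ l * (l.factorial * (l.factorial : ℝ) ^ (1 / (n : ℝ)))} := by
    refine isClosed_le (Continuous.abs ?_) continuous_const
    exact (gevreyAux_phi_smooth n).continuous_iteratedDeriv l (by exact_mod_cast le_top)
  have hsub := hclosed.closure_subset_iff (s := {x : ℝ | Real.cos (2 * π * x) ≠ 0}) |>.2 (by
    intro x hx
    rcases lt_or_gt_of_ne hx with h | h
    · have hcontR : Continuous (fun y : ℝ => Real.cos (2 * π * y)) := by fun_prop
      have heq : gevreyAux_phi n =ᶠ[nhds x] fun _ => 0 := by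
        filter_upwards [hcontR.continuousAt.eventually (gt_mem_nhds h)] with y hy
        simp [gevreyAux_phi, expNegInvGlue.zero_of_nonpos (hn.pow_nonpos hy.le)]
      have : iteratedDeriv l (gevreyAux_phi n) x = 0 := by
        rw [heq.iteratedDeriv_eq l]; simp [iteratedDeriv_const]
      simp only [Set.mem_ofPred_eq, this, abs_zero]
      positivity
    · exact H l x h)
  intro x
  exact hsub (gevreyAux_dense x)

lemma gevreyAux_summable (B ε : ℝ) (hB : 0 < B) (hε : 0 < ε) :
    Summable (fun l : ℕ => B ^ l / (l.factorial : ℝ) ^ ε) := by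
  apply summable_of_ratio_test_tendsto_lt_one (l := 0) one_pos
  · refine Filter.Eventually.of_forall fun l => ?_
    have : (0 : ℝ) < l.factorial := by exact_mod_cast l.factorial_pos
    positivity
  · have h : Filter.Tendsto (fun l : ℕ => B / ((l : ℝ) + 1) ^ ε) Filter.atTop (nhds 0) := by
      apply Filter.Tendsto.const_div_atTop
      apply (tendsto_rpow_atTop hε).comp
      exact Filter.tendsto_atTop_add_const_right _ _ tendsto_natCast_atTop_atTop
    refine h.congr fun l => ?_
    have h0 : (0 : ℝ) < l.factorial := by exact_mod_cast l.factorial_pos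
    have h1 : (0 : ℝ) < (l.factorial : ℝ) ^ ε := by positivity
    have h2 : (0 : ℝ) < ((l : ℝ) + 1) ^ ε := by positivity
    rw [Nat.factorial_succ]
    push_cast
    rw [Real.mul_rpow (by positivity) h0.le, Real.norm_eq_abs, Real.norm_eq_abs,
      abs_of_pos (by positivity), abs_of_pos (by positivity)]
    field_simp
    ring

/-- Existence of Gevrey bump functions: for `α > 1` and `L > 0` there is a non-negative
`1`-periodic `C^∞` function `φ` of class `G^{α,L}([−1/2,1/2])`, whose support within
`[−1/2,1/2]` is contained in `[−1/4,1/4]`, with `φ(0) = 1` and `φ'(0) = 0`. -/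
theorem gevrey_bump_exists (α L : ℝ) (hα : 1 < α) (hL : 0 < L) :
    ∃ φ : ℝ → ℝ,
      ContDiff ℝ (⊤ : ℕ∞) φ ∧
      (∀ x : ℝ, 0 ≤ φ x) ∧
      Function.Periodic φ 1 ∧
      gevreyNorm1 α L (Set.Icc (-(1/2)) (1/2)) φ ≠ ⊤ ∧
      (∀ x ∈ Set.Icc (-(1/2) : ℝ) (1/2), x ∉ Set.Icc (-(1/4) : ℝ) (1/4) → φ x = 0) ∧
      φ 0 = 1 ∧ deriv φ 0 = 0 := by
  obtain ⟨m, hm⟩ := exists_nat_one_div_lt (sub_pos.2 hα)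
  set n := 2 * m + 1 with hn
  have hodd : Odd n := ⟨m, hn⟩
  have hnα : 1 + 1 / (n : ℝ) < α := by
    have : 1 / (n : ℝ) ≤ 1 / ((m : ℝ) + 1) := by
      apply one_div_le_one_div_of_le (by positivity)
      rw [hn]; push_cast; linarith [(Nat.cast_nonneg m : (0 : ℝ) ≤ m)]
    linarith
  have heven : ∀ x, gevreyAux_phi n (-x) = gevreyAux_phi n x := by
    intro x
    simp [gevreyAux_phi]
  refine ⟨gevreyAux_phi n, gevreyAux_phi_smooth n, ?_, ?_, ?_, ?_, ?_, ?_⟩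
  · intro x
    exact mul_nonneg (Real.exp_pos _).le (expNegInvGlue.nonneg _)
  · intro x
    simp only [gevreyAux_phi]
    rw [mul_add, mul_one, Real.cos_add_two_pi]
  · obtain ⟨B, hB, H⟩ := gevreyAux_bound n hodd
    have hsum := (gevreyAux_summable (L ^ α * B) (α - (1 + 1 / (n : ℝ))) (by positivity)
      (by linarith)).mul_left (Real.exp 1)
    refine ne_top_of_le_ne_top hsum.tsum_ofReal_ne_top ?_
    unfold gevreyNorm1
    refine ENNReal.tsum_le_tsum fun l => ENNReal.ofReal_le_ofReal ?_
    have h0 : (0 : ℝ) < l.factorial := by exact_mod_cast l.factorial_pos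
    have hsup : (⨆ x : Set.Icc (-(1/2) : ℝ) (1/2), |deriv^[l] (gevreyAux_phi n) x.1|) ≤
        Real.exp 1 * B ^ l * (l.factorial * (l.factorial : ℝ) ^ (1 / (n : ℝ))) := by
      refine Real.iSup_le (fun x => ?_) (by positivity)
      rw [← iteratedDeriv_eq_iterate]
      exact H l x
    calc _ ≤ L ^ (α * (l : ℝ)) / ((Nat.factorial l : ℝ) ^ α) *
          (Real.exp 1 * B ^ l * (l.factorial * (l.factorial : ℝ) ^ (1 / (n : ℝ)))) := by gcongr
      _ = _ := by
        rw [Real.rpow_sub h0, Real.rpow_add h0, Real.rpow_one, Real.rpow_mul hL.le,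
          Real.rpow_natCast, mul_pow]
        field_simp
  · intro x hx hx'
    have : Real.cos (2 * π * x) ≤ 0 := by
      rw [← Real.cos_abs]
      have hpi := Real.pi_pos
      have h1 : |x| ≤ 1 / 2 := abs_le.2 hx
      have h2 : 1 / 4 < |x| := by
        by_contra hcon
        exact hx' (abs_le.1 (not_lt.1 hcon))
      rw [abs_mul, abs_of_pos (by positivity : 0 < 2 * π)]
      apply Real.cos_nonpos_of_pi_div_two_le_of_le <;> nlinarith
    simp [gevreyAux_phi, expNegInvGlue.zero_of_nonpos (hodd.pow_nonpos this)]
  · simp [gevreyAux_phi, expNegInvGlue, ← Real.exp_add]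
  · have h := deriv_comp_neg (gevreyAux_phi n) 0
    have e : (fun x => gevreyAux_phi n (-x)) = gevreyAux_phi n := funext heven
    rw [e, neg_zero] at h
    linarith
end
end

section
/- Let α ≥ 1, Λ₁ > 0, L₁ > 0, and let I, J be compact intervals of ℝ. Let f ∈ G^{α,Λ₁}(I) and g ∈ G^{α,L₁}(J) with g(J) ⊆ I. If |g|_{α,L₁} ≤ Λ₁^α, then f ∘ g ∈ G^{α,L₁}(J) and |f ∘ g|_{α,L₁} ≤ |f|_{α,Λ₁}. -/
open scoped BigOperators ENNReal
open Real

noncomputable section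

namespace GevreyAux
open PowerSeries

/-- exponential generating series of the derivatives, without constant term -/
def T (G : ℕ → ℝ) : PowerSeries ℝ := PowerSeries.mk fun i => if i = 0 then 0 else G i / i.factorial

def Q (G : ℕ → ℝ) (n k : ℕ) : ℝ := (n.factorial : ℝ) / k.factorial * coeff n (T G ^ k)

lemma coeff_pow_nonneg (P : PowerSeries ℝ) (hP : ∀ i, 0 ≤ coeff i P) (k n : ℕ) :
    0 ≤ coeff n (P ^ k) := by
  induction k generalizing n with
  | zero => rw [pow_zero, coeff_one]; split_ifs <;> norm_num
  | succ k ih =>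
    rw [pow_succ, coeff_mul]
    exact Finset.sum_nonneg fun p _ => mul_nonneg (ih _) (hP _)

lemma coeff_T_nonneg (G : ℕ → ℝ) (hG : ∀ i, 0 ≤ G i) (i : ℕ) : 0 ≤ coeff i (T G) := by
  rw [T, coeff_mk]; split_ifs
  · exact le_rfl
  · exact div_nonneg (hG _) (by positivity)

lemma Q_nonneg (G : ℕ → ℝ) (hG : ∀ i, 0 ≤ G i) (n k : ℕ) : 0 ≤ Q G n k :=
  mul_nonneg (by positivity) (coeff_pow_nonneg _ (coeff_T_nonneg G hG) _ _)

lemma coeff_T_pow_zero (G : ℕ → ℝ) (k n : ℕ) (h : n < k) : coeff n (T G ^ k) = 0 := by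
  induction k generalizing n with
  | zero => omega
  | succ k ih =>
    rw [pow_succ, coeff_mul]
    refine Finset.sum_eq_zero fun p hp => ?_
    rw [Finset.HasAntidiagonal.mem_antidiagonal] at hp
    by_cases h2 : p.2 = 0
    · rw [h2]; simp [T]
    · rw [ih p.1 (by omega), zero_mul]

lemma Q_succ (G : ℕ → ℝ) (n k : ℕ) :
    Q G (n+1) (k+1) = ∑ i ∈ Finset.range (n+1), (n.choose i : ℝ) * Q G i k * G (n - i + 1) := by
  have h := congrArg (coeff n) (Derivation.leibniz_pow (d⁄dX ℝ) (T G) (k+1))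
  rw [coeff_derivative, Nat.add_sub_cancel, map_nsmul, smul_eq_mul, coeff_mul,
    Finset.Nat.sum_antidiagonal_eq_sum_range_succ_mk] at h
  have e : Q G (n+1) (k+1) = (n.factorial : ℝ) / (k+1).factorial *
      (coeff (n+1) (T G ^ (k+1)) * ((n:ℝ)+1)) := by
    rw [Q, Nat.factorial_succ n]; push_cast; ring
  rw [e, h, nsmul_eq_mul, Finset.mul_sum, Finset.mul_sum]
  refine Finset.sum_congr rfl fun i hi => ?_
  have hi' : i ≤ n := by simpa [Nat.lt_succ_iff] using hi
  rw [coeff_derivative, Q]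
  simp only [T, coeff_mk, Nat.succ_ne_zero, if_false]
  rw [← Nat.choose_mul_factorial_mul_factorial hi', Nat.factorial_succ k, Nat.factorial_succ (n-i)]
  have h1 : ((n-i).factorial : ℝ) ≠ 0 := by positivity
  have h2 : (k.factorial : ℝ) ≠ 0 := by positivity
  have h3 : ((n-i : ℕ) : ℝ) + 1 ≠ 0 := by positivity
  have h4 : (k : ℝ) + 1 ≠ 0 := by positivity
  push_cast
  field_simp

lemma faa (g : ℝ → ℝ) (hg : ContDiff ℝ (⊤ : ℕ∞) g) (x : ℝ) (G : ℕ → ℝ)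
    (hG : ∀ i, |deriv^[i] g x| ≤ G i) (n : ℕ) : ∀ (f : ℝ → ℝ), ContDiff ℝ (⊤ : ℕ∞) f →
    |deriv^[n] (f ∘ g) x| ≤ ∑ k ∈ Finset.range (n+1), |deriv^[k] f (g x)| * Q G n k := by
  have hG0 : ∀ i, 0 ≤ G i := fun i => (abs_nonneg _).trans (hG i)
  induction n using Nat.strong_induction_on with
  | _ n ih =>
  intro f hf
  rcases n with _ | n
  · simp [Q]
  have hf' : ContDiff ℝ (⊤ : ℕ∞) (deriv f) := (contDiff_infty_iff_deriv.1 hf).2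
  have hg' : ContDiff ℝ (⊤ : ℕ∞) (deriv g) := (contDiff_infty_iff_deriv.1 hg).2
  have hd : deriv (f ∘ g) = (deriv f ∘ g) * deriv g := by
    ext y
    exact deriv_comp y ((contDiff_infty_iff_deriv.1 hf).1 _) ((contDiff_infty_iff_deriv.1 hg).1 _)
  have hle : ((n : ℕ) : WithTop ℕ∞) ≤ ((⊤ : ℕ∞) : WithTop ℕ∞) := by exact_mod_cast le_top
  rw [Function.iterate_succ_apply, hd, ← iteratedDeriv_eq_iterate,
    iteratedDeriv_mul ((hf'.comp hg).contDiffAt.of_le hle) (hg'.contDiffAt.of_le hle)]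
  simp only [iteratedDeriv_eq_iterate]
  calc _ ≤ ∑ i ∈ Finset.range (n+1),
        |(n.choose i : ℝ) * deriv^[i] (deriv f ∘ g) x * deriv^[n-i] (deriv g) x| :=
        Finset.abs_sum_le_sum_abs _ _
    _ ≤ ∑ i ∈ Finset.range (n+1), (n.choose i : ℝ) *
        (∑ k ∈ Finset.range (n+1), |deriv^[k+1] f (g x)| * Q G i k) * G (n-i+1) := by
        refine Finset.sum_le_sum fun i hi => ?_
        have hi' : i < n + 1 := by simpa using hi
        rw [abs_mul, abs_mul, Nat.abs_cast]
        have h1 := (ih i hi' (deriv f) hf')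
        have h2 : ∑ k ∈ Finset.range (i+1), |deriv^[k] (deriv f) (g x)| * Q G i k ≤
            ∑ k ∈ Finset.range (n+1), |deriv^[k+1] f (g x)| * Q G i k := by
          simp only [Function.iterate_succ_apply]
          refine Finset.sum_le_sum_of_subset_of_nonneg ?_ fun k _ _ =>
            mul_nonneg (abs_nonneg _) (Q_nonneg G hG0 _ _)
          exact Finset.range_mono (by omega)
        have h3 := hG (n-i+1)
        rw [Function.iterate_succ_apply] at h3
        have := h1.trans h2
        have := (abs_nonneg _).trans this
        gcongr
    _ = ∑ k ∈ Finset.range (n+1), |deriv^[k+1] f (g x)| * Q G (n+1) (k+1) := by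
        simp only [Q_succ, Finset.mul_sum, Finset.sum_mul]
        rw [Finset.sum_comm]
        refine Finset.sum_congr rfl fun i _ => Finset.sum_congr rfl fun k _ => ?_
        ring
    _ ≤ _ := by
        rw [Finset.sum_range_succ' _ (n+1)]
        exact le_add_of_nonneg_right (mul_nonneg (abs_nonneg _) (Q_nonneg G hG0 _ _))

def W (α L : ℝ) (n : ℕ) : ℝ := L ^ (α * (n:ℝ)) / (n.factorial : ℝ) ^ (α - 1)

def B (α L : ℝ) (G : ℕ → ℝ) : PowerSeries ℝ := PowerSeries.mk fun i => W α L i * coeff i (T G)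

lemma W_nonneg (α L : ℝ) (hL : 0 < L) (n : ℕ) : 0 ≤ W α L n := by unfold W; positivity

lemma coeff_B_nonneg (α L : ℝ) (hL : 0 < L) (G : ℕ → ℝ) (hG : ∀ i, 0 ≤ G i) (i : ℕ) :
    0 ≤ coeff i (B α L G) := by
  rw [B, coeff_mk]; exact mul_nonneg (W_nonneg _ _ hL _) (coeff_T_nonneg G hG _)

lemma W_step (α L : ℝ) (hα : 1 ≤ α) (hL : 0 < L) (i j k : ℕ) (hi : i ≠ 0) (hj : k ≤ j) :
    W α L (j + i) * ((k+1).factorial : ℝ) ^ (α - 1) ≤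
      W α L j * (k.factorial : ℝ) ^ (α-1) * W α L i := by
  have key : (k+1).factorial * (j.factorial * i.factorial) ≤ k.factorial * (j+i).factorial := by
    rw [← Nat.add_choose_mul_factorial_mul_factorial j i, Nat.factorial_succ]
    have : k + 1 ≤ (j+i).choose i := by
      rw [← Nat.choose_symm_add]
      calc k + 1 ≤ j + 1 := by omega
        _ = (j+1).choose j := by simp
        _ ≤ _ := Nat.choose_le_choose _ (by omega)
    calc _ = (k+1) * (k.factorial * (j.factorial * i.factorial)) := by ring
      _ ≤ (j+i).choose i * (k.factorial * (j.factorial * i.factorial)) := by gcongr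
      _ = _ := by ring
  have key' : ((k+1).factorial : ℝ)^(α-1) * ((j.factorial:ℝ)^(α-1) * (i.factorial:ℝ)^(α-1)) ≤
      (k.factorial:ℝ)^(α-1) * ((j+i).factorial:ℝ)^(α-1) := by
    rw [← Real.mul_rpow, ← Real.mul_rpow, ← Real.mul_rpow] <;> try positivity
    apply Real.rpow_le_rpow (by positivity) _ (by linarith)
    exact_mod_cast key
  unfold W
  have hs : L ^ (α * ((j+i : ℕ):ℝ)) = L ^ (α * (j:ℝ)) * L ^ (α * (i:ℝ)) := by
    rw [← Real.rpow_add hL]; push_cast; ring_nf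
  rw [hs]
  have e1 : 0 < ((j+i).factorial:ℝ)^(α-1) := by positivity
  have e2 : 0 < (j.factorial:ℝ)^(α-1) := by positivity
  have e3 : 0 < (i.factorial:ℝ)^(α-1) := by positivity
  have e4 : 0 < L ^ (α * (j:ℝ)) * L ^ (α * (i:ℝ)) := by positivity
  rw [div_mul_eq_mul_div, div_mul_eq_mul_div, div_mul_div_comm, div_le_div_iff₀ e1 (by positivity)]
  calc _ = L ^ (α * (j:ℝ)) * L ^ (α * (i:ℝ)) * (((k+1).factorial : ℝ)^(α-1) *
          ((j.factorial:ℝ)^(α-1) * (i.factorial:ℝ)^(α-1))) := by ring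
    _ ≤ L ^ (α * (j:ℝ)) * L ^ (α * (i:ℝ)) *
          ((k.factorial:ℝ)^(α-1) * ((j+i).factorial:ℝ)^(α-1)) := by gcongr
    _ = _ := by ring

lemma coeff_B_pow (α L : ℝ) (hα : 1 ≤ α) (hL : 0 < L) (G : ℕ → ℝ) (hG : ∀ i, 0 ≤ G i) (k n : ℕ) :
    W α L n * (k.factorial : ℝ) ^ (α-1) * coeff n (T G ^ k) ≤ coeff n (B α L G ^ k) := by
  induction k generalizing n with
  | zero =>
    rw [pow_zero, pow_zero, coeff_one]
    split_ifs with h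
    · simp [h, W]
    · simp
  | succ k ih =>
    rw [pow_succ, pow_succ, coeff_mul, coeff_mul, Finset.mul_sum]
    refine Finset.sum_le_sum fun p hp => ?_
    obtain ⟨j, i⟩ := p
    rw [Finset.HasAntidiagonal.mem_antidiagonal] at hp
    simp only at hp ⊢
    have hT := coeff_pow_nonneg _ (coeff_T_nonneg G hG)
    have hr : (0:ℝ) ≤ coeff j (B α L G ^ k) * coeff i (B α L G) :=
      mul_nonneg (coeff_pow_nonneg _ (coeff_B_nonneg α L hL G hG) _ _) (coeff_B_nonneg α L hL G hG _)
    by_cases hi : i = 0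
    · have : coeff i (T G) = 0 := by simp [hi, T]
      rw [this, mul_zero, mul_zero]; exact hr
    by_cases hj : j < k
    · rw [coeff_T_pow_zero G k j hj, zero_mul, mul_zero]; exact hr
    have h1 := W_step α L hα hL i j k hi (by omega)
    rw [← hp]
    calc _ ≤ (W α L j * (k.factorial : ℝ) ^ (α-1) * W α L i) *
            (coeff j (T G ^ k) * coeff i (T G)) :=
          mul_le_mul_of_nonneg_right h1 (mul_nonneg (hT _ _) (coeff_T_nonneg G hG _))
      _ = (W α L j * (k.factorial : ℝ) ^ (α-1) * coeff j (T G ^ k)) *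
            (W α L i * coeff i (T G)) := by ring
      _ ≤ coeff j (B α L G ^ k) * (W α L i * coeff i (T G)) :=
          mul_le_mul_of_nonneg_right (ih j)
            (mul_nonneg (W_nonneg _ _ hL _) (coeff_T_nonneg G hG _))
      _ = _ := by rw [B, coeff_mk]

lemma tsum_pow (P : PowerSeries ℝ) (hP : ∀ i, 0 ≤ coeff i P) (k : ℕ) :
    ∑' n, ENNReal.ofReal (coeff n (P ^ k)) = (∑' n, ENNReal.ofReal (coeff n P)) ^ k := by
  induction k with
  | zero =>
    rw [tsum_eq_single 0]
    · simp
    · intro n hn; simp [coeff_one, hn]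
  | succ k ih =>
    rw [pow_succ (∑' n, ENNReal.ofReal (coeff n P)), ← ih, ← ENNReal.tsum_mul_right]
    simp_rw [← ENNReal.tsum_mul_left]
    rw [← ENNReal.tsum_prod (f := fun i j => ENNReal.ofReal (coeff i (P^k)) *
      ENNReal.ofReal (coeff j P)), ← Finset.HasAntidiagonal.sigmaAntidiagonalEquivProd.tsum_eq,
      ENNReal.tsum_sigma']
    refine tsum_congr fun n => ?_
    rw [pow_succ, coeff_mul, ENNReal.ofReal_sum_of_nonneg
      (fun p _ => mul_nonneg (coeff_pow_nonneg P hP _ _) (hP _)), tsum_fintype,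
      ← Finset.sum_coe_sort]
    refine Finset.sum_congr rfl fun p _ => ?_
    rw [ENNReal.ofReal_mul (coeff_pow_nonneg P hP _ _)]
    rfl

lemma le_sup (a b : ℝ) (f : ℝ → ℝ) (hf : ContDiff ℝ (⊤ : ℕ∞) f) (k : ℕ) (y : ℝ)
    (hy : y ∈ Set.Icc a b) : |deriv^[k] f y| ≤ ⨆ x : Set.Icc a b, |deriv^[k] f x.1| := by
  have hc : Continuous (deriv^[k] f) := by
    rw [← iteratedDeriv_eq_iterate]
    exact hf.continuous_iteratedDeriv k (by exact_mod_cast le_top)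
  have hb : BddAbove (Set.range fun x : Set.Icc a b => |deriv^[k] f x.1|) :=
    (isCompact_range (by fun_prop)).bddAbove
  exact le_ciSup hb ⟨y, hy⟩

end GevreyAux

/-- Composition of Gevrey functions: if `f ∈ G^{α,Λ₁}(I)`, `g ∈ G^{α,L₁}(J)`, `g(J) ⊆ I`
and `|g|_{α,L₁} ≤ Λ₁^α`, then `f ∘ g ∈ G^{α,L₁}(J)` with `|f ∘ g|_{α,L₁} ≤ |f|_{α,Λ₁}`.
Here `I = [a,b]` and `J = [c,d]` are compact intervals of `ℝ`. -/
theorem gevrey_comp (α Λ₁ L₁ : ℝ) (hα : 1 ≤ α) (hΛ₁ : 0 < Λ₁) (hL₁ : 0 < L₁)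
    (a b c d : ℝ) (hab : a ≤ b) (hcd : c ≤ d) (f g : ℝ → ℝ)
    (hf : ContDiff ℝ (⊤ : ℕ∞) f) (hg : ContDiff ℝ (⊤ : ℕ∞) g)
    (hfI : gevreyNorm1 α Λ₁ (Set.Icc a b) f ≠ ⊤)
    (hmap : Set.MapsTo g (Set.Icc c d) (Set.Icc a b))
    (hbound : gevreyNorm1 α L₁ (Set.Icc c d) g ≤ ENNReal.ofReal (Λ₁ ^ α)) :
    gevreyNorm1 α L₁ (Set.Icc c d) (f ∘ g) ≤ gevreyNorm1 α Λ₁ (Set.Icc a b) f := by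
  classical
  set F : ℕ → ℝ := fun k => ⨆ x : Set.Icc a b, |deriv^[k] f x.1| with hF
  set G : ℕ → ℝ := fun k => ⨆ x : Set.Icc c d, |deriv^[k] g x.1| with hGdef
  have hF0 : ∀ k, 0 ≤ F k := fun k => Real.iSup_nonneg fun _ => abs_nonneg _
  have hG0 : ∀ k, 0 ≤ G k := fun k => Real.iSup_nonneg fun _ => abs_nonneg _
  have hDW : ∀ n : ℕ, L₁ ^ (α * (n:ℝ)) / (n.factorial:ℝ) ^ α * n.factorial = GevreyAux.W α L₁ n := by
    intro n
    have hn : (0:ℝ) < n.factorial := by positivity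
    have : (n.factorial:ℝ) ^ α ≠ 0 := by positivity
    rw [GevreyAux.W, Real.rpow_sub hn, Real.rpow_one]
    field_simp
  have hS : ∑' n, ENNReal.ofReal (PowerSeries.coeff n (GevreyAux.B α L₁ G)) ≤
      ENNReal.ofReal (Λ₁ ^ α) := by
    refine le_trans (ENNReal.tsum_le_tsum fun n => ENNReal.ofReal_le_ofReal ?_) hbound
    rw [GevreyAux.B, PowerSeries.coeff_mk, GevreyAux.T, PowerSeries.coeff_mk, ← hDW]
    split_ifs
    · rw [mul_zero]; exact mul_nonneg (by positivity) (hG0 n)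
    · have : (n.factorial:ℝ) ≠ 0 := by positivity
      apply le_of_eq
      change _ = _ * G n
      field_simp
  have hpt : ∀ n : ℕ, L₁ ^ (α * (n : ℝ)) / ((Nat.factorial n : ℝ) ^ α) *
      (⨆ x : Set.Icc c d, |deriv^[n] (f ∘ g) x.1|) ≤
      ∑ k ∈ Finset.range (n+1), F k / (k.factorial:ℝ)^α *
        PowerSeries.coeff n (GevreyAux.B α L₁ G ^ k) := by
    intro n
    haveI : Nonempty (Set.Icc c d) := ⟨⟨c, le_rfl, hcd⟩⟩
    have h1 : (⨆ x : Set.Icc c d, |deriv^[n] (f ∘ g) x.1|) ≤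
        ∑ k ∈ Finset.range (n+1), F k * GevreyAux.Q G n k := by
      refine ciSup_le fun x => ?_
      refine (GevreyAux.faa g hg x.1 G (fun i => GevreyAux.le_sup c d g hg i x.1 x.2) n f hf).trans ?_
      refine Finset.sum_le_sum fun k _ => mul_le_mul_of_nonneg_right ?_ (GevreyAux.Q_nonneg G hG0 n k)
      exact GevreyAux.le_sup a b f hf k _ (hmap x.2)
    refine (mul_le_mul_of_nonneg_left h1 (by positivity)).trans ?_
    rw [Finset.mul_sum]
    refine Finset.sum_le_sum fun k _ => ?_
    have h2 := GevreyAux.coeff_B_pow α L₁ hα hL₁ G hG0 k n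
    have hk : (0:ℝ) < k.factorial := by positivity
    have hk' : (0:ℝ) < (k.factorial:ℝ)^α := by positivity
    calc _ = F k / (k.factorial:ℝ)^α * (GevreyAux.W α L₁ n * (k.factorial : ℝ) ^ (α-1) *
          PowerSeries.coeff n (GevreyAux.T G ^ k)) := by
          rw [← hDW, GevreyAux.Q, Real.rpow_sub hk, Real.rpow_one]
          field_simp
      _ ≤ _ := mul_le_mul_of_nonneg_left h2 (div_nonneg (hF0 k) hk'.le)
  have hBk := GevreyAux.coeff_pow_nonneg _ (GevreyAux.coeff_B_nonneg α L₁ hL₁ G hG0)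
  have hc0 : ∀ k : ℕ, 0 ≤ F k / (k.factorial:ℝ)^α := fun k => div_nonneg (hF0 k) (by positivity)
  unfold gevreyNorm1
  calc _ ≤ ∑' n : ℕ, ∑' k : ℕ, ENNReal.ofReal (F k / (k.factorial:ℝ)^α) *
        ENNReal.ofReal (PowerSeries.coeff n (GevreyAux.B α L₁ G ^ k)) := by
        refine ENNReal.tsum_le_tsum fun n => (ENNReal.ofReal_le_ofReal (hpt n)).trans ?_
        rw [ENNReal.ofReal_sum_of_nonneg (fun k _ => mul_nonneg (hc0 k) (hBk k n))]
        simp_rw [ENNReal.ofReal_mul (hc0 _)]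
        exact ENNReal.sum_le_tsum _
    _ = ∑' k : ℕ, ENNReal.ofReal (F k / (k.factorial:ℝ)^α) *
        (∑' n, ENNReal.ofReal (PowerSeries.coeff n (GevreyAux.B α L₁ G))) ^ k := by
        rw [ENNReal.tsum_comm]
        refine tsum_congr fun k => ?_
        rw [ENNReal.tsum_mul_left,
          GevreyAux.tsum_pow _ (GevreyAux.coeff_B_nonneg α L₁ hL₁ G hG0)]
    _ ≤ _ := by
        refine ENNReal.tsum_le_tsum fun k => ?_
        calc _ ≤ ENNReal.ofReal (F k / (k.factorial:ℝ)^α) * (ENNReal.ofReal (Λ₁ ^ α)) ^ k := by gcongr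
          _ = _ := by
            rw [← ENNReal.ofReal_pow (by positivity), ← ENNReal.ofReal_mul (hc0 k),
              ← Real.rpow_natCast, ← Real.rpow_mul hΛ₁.le]
            congr 1
            change _ = _ * F k
            ring
end
end
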